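/- arXiv:1902.07937 — 2 statements merged into one kernel-verified Lean document; each statement's English description precedes it below -/
import Mathlib

section
/- Let H = (X,Y) be an undirected graph and let s ≥ 5 be an integer. Construct a 2-typed Schelling game with types red and blue, s strategic red agents, and the following topology G consisting of three connected components G1, G2, G3 with stubborn agents placed as described. G1 has vertex set X ∪ W with |W| = s−2 and edge set Y together with all edges {v,w} for v ∈ X, w ∈ W; a stubborn blue agent occupies each node of W. G2 is a complete bipartite graph with parts L and R' where |L| = s−2 and |R'| = 4s; stubborn red agents occupy 2s+1 nodes of R' and stubborn blue agents occupy the remaining 2s−1 nodes of R'. G3 consists of three unoccupied nodes x, y, z and 121 further nodes occupied by stubborn agents (41 red and 80 blue); x and y are adjacent; x is adjacent to exactly 1 of the stubborn red agents and exactly 2 of the stubborn blue agents of G3; y is adjacent to all 41 stubborn red agents and all 80 stubborn blue agents of G3; z is adjacent to exactly 5 of the stubborn red agents and exactly 7 of the stubborn blue agents of G3. Then this game admits an equilibrium assignment if and only if H contains a clique of size s. -/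
/-- A (social) Schelling game: agents `A`, of which `strategic` are the strategic
ones (the rest being stubborn), a social network `net` on the agents (the friends
of an agent are her neighbors in `net`, all other agents are her enemies), a
topology `top` on the set of locations `V`, and the preferred locations `loc`
of the (stubborn) agents. -/
structure SchellingGame (A V : Type) where
  strategic : Finset A
  net : SimpleGraph A
  top : SimpleGraph V
  loc : A → V

namespace SchellingGame

variable {A V : Type} [Fintype A] [DecidableEq A] [Fintype V] [DecidableEq V]

/-- There are `n ≥ 2` agents, strictly more locations than agents, and the
stubborn agents have pairwise distinct preferred locations. -/
def WellFormed (g : SchellingGame A V) : Prop :=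
  2 ≤ Fintype.card A ∧ Fintype.card A < Fintype.card V ∧
    Set.InjOn g.loc ↑(g.strategicᶜ)

/-- An assignment is an injective placement of the agents on the nodes of the
topology which places every stubborn agent at her preferred location. -/
def IsAssignment (g : SchellingGame A V) (v : A → V) : Prop :=
  Function.Injective v ∧ ∀ i ∉ g.strategic, v i = g.loc i

/-- The number of friends of `i` occupying nodes adjacent to `v i`. -/
noncomputable def fcount (g : SchellingGame A V) (v : A → V) (i : A) : ℕ :=
  Nat.card {j : A // g.net.Adj i j ∧ g.top.Adj (v i) (v j)}

/-- The number of enemies of `i` occupying nodes adjacent to `v i`. -/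
noncomputable def ecount (g : SchellingGame A V) (v : A → V) (i : A) : ℕ :=
  Nat.card {j : A // j ≠ i ∧ ¬ g.net.Adj i j ∧ g.top.Adj (v i) (v j)}

/-- The utility of agent `i` under assignment `v`: `0` if `i` has no adjacent
friends, and otherwise the fraction of friends among her occupied neighbors. -/
noncomputable def util (g : SchellingGame A V) (v : A → V) (i : A) : ℚ :=
  if g.fcount v i = 0 then 0
  else (g.fcount v i : ℚ) / ((g.fcount v i : ℚ) + (g.ecount v i : ℚ))

/-- An assignment is an equilibrium if no strategic agent can strictly increase
her utility by relocating to an unoccupied node. -/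
def IsEquilibrium (g : SchellingGame A V) (v : A → V) : Prop :=
  g.IsAssignment v ∧ ∀ i ∈ g.strategic, ∀ z : V, (∀ j : A, v j ≠ z) →
    g.util (Function.update v i z) i ≤ g.util v i

/-- The social welfare: the total utility of the strategic agents. -/
noncomputable def SW (g : SchellingGame A V) (v : A → V) : ℚ :=
  ∑ i ∈ g.strategic, g.util v i

/-- `g` is a `k`-typed Schelling game with type map `typ`: two distinct agents are
friends iff they have the same type, and every type is nonempty. -/
def IsTypedGame (g : SchellingGame A V) (k : ℕ) (typ : A → Fin k) : Prop :=
  (∀ i j : A, g.net.Adj i j ↔ (i ≠ j ∧ typ i = typ j)) ∧ ∀ c : Fin k, ∃ i : A, typ i = c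

end SchellingGame

/-- A star graph: one center node adjacent to all other nodes, and no other edges. -/
def IsStar {V : Type} (G : SimpleGraph V) : Prop :=
  ∃ c : V, ∀ a b : V, G.Adj a b ↔ (a ≠ b ∧ (a = c ∨ b = c))

/-- Agents of the reduction: `s` strategic red agents, `s-2` stubborn blue agents
(placed on `W`), `4s` stubborn agents placed on the part `R'` of `G2` (the first
`2s+1` red, the remaining `2s-1` blue), and `121` stubborn agents placed in `G3`
(the first `41` red, the remaining `80` blue). -/
abbrev A5 (s : ℕ) : Type := Fin s ⊕ (Fin (s - 2) ⊕ (Fin (4 * s) ⊕ Fin 121))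

/-- Nodes of the topology: `G1` has node set `X ∪ W` with `|W| = s-2`; `G2` is complete
bipartite with parts `L` (`|L| = s-2`) and `R'` (`|R'| = 4s`); `G3` has three nodes
`x, y, z` (coded by `Fin 3`) and `121` nodes for its stubborn agents. -/
abbrev V5 (X : Type) (s : ℕ) : Type :=
  (X ⊕ Fin (s - 2)) ⊕ ((Fin (s - 2) ⊕ Fin (4 * s)) ⊕ (Fin 3 ⊕ Fin 121))

/-- Types (red = 0, blue = 1). -/
def typ5 (s : ℕ) : A5 s → Fin 2
  | .inl _ => 0
  | .inr (.inl _) => 1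
  | .inr (.inr (.inl i)) => if (i : ℕ) < 2 * s + 1 then 0 else 1
  | .inr (.inr (.inr i)) => if (i : ℕ) < 41 then 0 else 1

/-- The social network of the 2-typed game: distinct agents of the same type. -/
def net5 (s : ℕ) : SimpleGraph (A5 s) where
  Adj i j := i ≠ j ∧ typ5 s i = typ5 s j
  symm := ⟨fun _ _ h => ⟨Ne.symm h.1, h.2.symm⟩⟩
  loopless := ⟨fun _ h => h.1 rfl⟩

/-- The edges of the topology (up to symmetrization): inside `G1`, the edges of `H` on
`X` together with all edges between `X` and `W`; inside `G2`, all edges between `L` and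
`R'`; inside `G3` (where `x, y, z` are coded by `0, 1, 2 : Fin 3`): the edge `{x,y}`,
edges from `x` to 1 red and 2 blue stubborn nodes, from `y` to all 41 red and 80 blue
stubborn nodes, and from `z` to 5 red and 7 blue stubborn nodes. -/
def rel5 (X : Type) (H : SimpleGraph X) (s : ℕ) : V5 X s → V5 X s → Prop
  | .inl (.inl u), .inl (.inl u') => H.Adj u u'
  | .inl (.inl _), .inl (.inr _) => True
  | .inr (.inl (.inl _)), .inr (.inl (.inr _)) => True
  | .inr (.inr (.inl a)), .inr (.inr (.inl b)) => (a : ℕ) = 0 ∧ (b : ℕ) = 1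
  | .inr (.inr (.inl a)), .inr (.inr (.inr i)) =>
      ((a : ℕ) = 0 ∧ ((i : ℕ) = 0 ∨ (i : ℕ) = 41 ∨ (i : ℕ) = 42)) ∨
      ((a : ℕ) = 1) ∨
      ((a : ℕ) = 2 ∧ ((i : ℕ) < 5 ∨ (41 ≤ (i : ℕ) ∧ (i : ℕ) < 48)))
  | _, _ => False

/-- The topology of the reduction. -/
def top5 (X : Type) (H : SimpleGraph X) (s : ℕ) : SimpleGraph (V5 X s) :=
  SimpleGraph.fromRel (rel5 X H s)

/-- Locations of the stubborn agents (the value on strategic agents is irrelevant):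
the `W`-agents on `W`, the `G2`-agents on `R'`, and the `G3`-agents on the stubborn
nodes of `G3`. -/
def loc5 (X : Type) (s : ℕ) : A5 s → V5 X s
  | .inl _ => .inr (.inr (.inl 0))
  | .inr (.inl i) => .inl (.inr i)
  | .inr (.inr (.inl i)) => .inr (.inl (.inr i))
  | .inr (.inr (.inr i)) => .inr (.inr (.inr i))

/-- The 2-typed Schelling game of the reduction: the strategic agents are exactly the
`s` red agents `Sum.inl`. -/
def game5 (X : Type) (H : SimpleGraph X) (s : ℕ) : SchellingGame (A5 s) (V5 X s) where
  strategic := Finset.univ.filter (fun p => p.isLeft = true)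
  net := net5 s
  top := top5 X H s
  loc := loc5 X s

/-!
A strategic agent with `d` strategic neighbours gets `d / (d + s - 2)` at a vertex of `H`,
`(2s + 1) / (4s) > 1/2` at any node of `L`, and at most `1/2` at `x`, `y` or `z`. Suppose given an
equilibrium.

If `L` has a free node, every strategic agent outside `L` gets more than `1/2`, so she occupies a
vertex of `H` adjacent to all `s - 1` others. As `|L| = s - 2`, there is such an agent; she has
no neighbour in `L`, so all agents are of this kind and they occupy an `s`-clique.

If `L` is full, the two remaining agents occupy two of `x`, `y`, `z`, because a vertex of `H` pays
at most `1 / (s - 1) ≤ 1/3`, and a free node among `y` and `z` at least `41/121`. Numbering `x`,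
`y`, `z` cyclically, an agent whose partner is at `t` strictly prefers `t + 2` to `t + 1`. One of
the two always sits just after the other, so she wants to move.

Conversely, agents on an `s`-clique all get `(s - 1) / (2s - 3)`, which no unoccupied node exceeds.
-/

namespace SchellingGame

variable {A V : Type} {g : SchellingGame A V} {v : A → V} {i j : A} {p : V}

theorem util_eq_div (g : SchellingGame A V) (v : A → V) (i : A) :
    g.util v i = (g.fcount v i : ℚ) / (g.fcount v i + g.ecount v i) := by
  unfold util
  split_ifs with h
  · rw [h, Nat.cast_zero, zero_div]
  · rfl

theorem IsAssignment.ne_loc (hv : g.IsAssignment v) (hi : i ∈ g.strategic)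
    (hj : j ∉ g.strategic) : v i ≠ g.loc j := by
  rw [← hv.2 j hj]
  exact hv.1.ne (ne_of_mem_of_not_mem hi hj)

theorem IsAssignment.forall_ne (hv : g.IsAssignment v) (hstrat : ∀ j ∈ g.strategic, v j ≠ p)
    (hstub : ∀ j ∉ g.strategic, g.loc j ≠ p) (j : A) : v j ≠ p := by
  by_cases hj : j ∈ g.strategic
  · exact hstrat j hj
  · exact hv.2 j hj ▸ hstub j hj

variable [DecidableEq A]

/-- The utility of agent `i` after she relocates to the node `p` while every other agent stays
where `v` places her; relocating to her own node is allowed and changes nothing. -/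
noncomputable def payoff (g : SchellingGame A V) (v : A → V) (i : A) (p : V) : ℚ :=
  g.util (Function.update v i p) i

theorem payoff_self (g : SchellingGame A V) (v : A → V) (i : A) :
    g.payoff v i (v i) = g.util v i := by
  rw [payoff, Function.update_eq_self]

theorem isEquilibrium_iff_payoff_le :
    g.IsEquilibrium v ↔ g.IsAssignment v ∧ ∀ i ∈ g.strategic, ∀ p, (∀ j, v j ≠ p) →
      g.payoff v i p ≤ g.payoff v i (v i) := by
  simp only [payoff_self]
  rfl

end SchellingGame

namespace CliqueReduction

open Finset SimpleGraph

section Counting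

theorem card_filter_sum {α β : Type*} [Fintype α] [Fintype β] (P : α ⊕ β → Prop)
    [DecidablePred P] :
    #{x | P x} = #{a | P (.inl a)} + #{b | P (.inr b)} := by
  simp only [card_filter, Fintype.sum_sum_type]

theorem card_filter_le_val (m n : ℕ) : #{i : Fin n | m ≤ i.val} = n - m := by
  have hsplit := card_filter_add_card_filter_not (s := univ) (fun i : Fin n => i.val < m)
  simp only [Fin.card_filter_val_lt, not_lt, card_univ, Fintype.card_fin] at hsplit
  omega

theorem card_filter_exists_eq_comm {α β γ : Type*} [Fintype α] [Fintype β] {f : α → γ}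
    {g : β → γ} [DecidablePred fun a => ∃ b, f a = g b] [DecidablePred fun b => ∃ a, f a = g b]
    (hf : f.Injective) (hg : g.Injective) :
    #{a | ∃ b, f a = g b} = #{b | ∃ a, f a = g b} := by
  classical
  have himage : ({a | ∃ b, f a = g b} : Finset α).image f =
      ({b | ∃ a, f a = g b} : Finset β).image g := by
    ext c
    simp only [mem_image, mem_filter_univ]
    exact ⟨fun ⟨a, ⟨b, hb⟩, ha⟩ => ⟨b, ⟨a, hb⟩, hb ▸ ha⟩,
      fun ⟨b, ⟨a, ha⟩, hb⟩ => ⟨a, ⟨b, ha⟩, ha.trans hb⟩⟩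
  rw [← card_image_of_injective _ hf, himage, card_image_of_injective _ hg]

end Counting

theorem div_add_le_div_add {K : Type*} [Field K] [LinearOrder K] [IsStrictOrderedRing K]
    {x y c : K} (hx : 0 ≤ x) (hc : 0 < c) (hxy : x ≤ y) : x / (x + c) ≤ y / (y + c) := by
  rw [div_le_div_iff₀ (by positivity) (by linarith)]
  linarith [mul_le_mul_of_nonneg_right hxy hc.le]

variable {X : Type} {H : SimpleGraph X} {s : ℕ} {v : A5 s → V5 X s} {a b : Fin s}

/-- A vertex of `H`, as a node of `G1`. -/
abbrev graphNode (u : X) : V5 X s := .inl (.inl u)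

/-- A node of the side `L` of the complete bipartite graph `G2`. -/
abbrev leftNode (l : Fin (s - 2)) : V5 X s := .inr (.inl (.inl l))

/-- One of the three nodes `x, y, z` of `G3` that hold no stubborn agent, coded by `0, 1, 2`. -/
abbrev gadgetNode (t : Fin 3) : V5 X s := .inr (.inr (.inl t))

section Game

theorem top5_adj_graphNode {u u' : X} :
    (top5 X H s).Adj (graphNode u) (graphNode u') ↔ H.Adj u u' := by
  simpa [top5, rel5, H.adj_comm u'] using H.ne_of_adj

theorem loc5_inr_injective : Function.Injective fun i => loc5 X s (.inr i) := by
  rintro (i | i | i) (j | j | j) h <;> cases h <;> rfl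

theorem loc5_ne_graphNode (i) (u : X) : loc5 X s (.inr i) ≠ graphNode u := by
  rcases i with i | i | i <;> simp [loc5]

theorem loc5_ne_leftNode (i) (l : Fin (s - 2)) : loc5 X s (.inr i) ≠ leftNode l := by
  rcases i with i | i | i <;> simp [loc5]

theorem loc5_ne_gadgetNode (i) (t : Fin 3) : loc5 X s (.inr i) ≠ gadgetNode t := by
  rcases i with i | i | i <;> simp [loc5]

theorem inl_mem_strategic (a : Fin s) : .inl a ∈ (game5 X H s).strategic := by
  simp [game5]

theorem inr_notMem_strategic (i) : .inr i ∉ (game5 X H s).strategic := by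
  simp [game5]

theorem exists_eq_graphNode_or_leftNode_or_gadgetNode (hv : (game5 X H s).IsAssignment v)
    (j : Fin s) :
    (∃ u, v (.inl j) = graphNode u) ∨ (∃ l, v (.inl j) = leftNode l) ∨
      ∃ t, v (.inl j) = gadgetNode t := by
  have hne : ∀ i, v (.inl j) ≠ loc5 X s (.inr i) := fun i =>
    hv.ne_loc (inl_mem_strategic j) (inr_notMem_strategic i)
  rcases h : v (.inl j) with (u | w) | (l | i) | t | i
  · exact .inl ⟨u, rfl⟩
  · exact absurd h (hne (.inl w))
  · exact .inr (.inl ⟨l, rfl⟩)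
  · exact absurd h (hne (.inr (.inl i)))
  · exact .inr (.inr ⟨t, rfl⟩)
  · exact absurd h (hne (.inr (.inr i)))

theorem payoff_le_of_isEquilibrium (hv : (game5 X H s).IsEquilibrium v) (a : Fin s) {p : V5 X s}
    (hstrat : ∀ j, v (.inl j) ≠ p) (hstub : ∀ i, loc5 X s (.inr i) ≠ p) :
    (game5 X H s).payoff v (.inl a) p ≤ (game5 X H s).payoff v (.inl a) (v (.inl a)) := by
  refine (SchellingGame.isEquilibrium_iff_payoff_le.1 hv).2 _ (inl_mem_strategic a) p
    (hv.1.forall_ne ?_ ?_)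
  · rintro (j | i) hj
    exacts [hstrat j, absurd hj (inr_notMem_strategic i)]
  · rintro (j | i) hj
    exacts [absurd (inl_mem_strategic j) hj, hstub i]

end Game

section Degree

open scoped Classical in
/-- The number of strategic agents other than `a` that `v` places next to the node `p`. -/
noncomputable def strategicDegree (H : SimpleGraph X) (v : A5 s → V5 X s) (a : Fin s)
    (p : V5 X s) : ℕ :=
  #{j : Fin s | j ≠ a ∧ (top5 X H s).Adj p (v (.inl j))}

open scoped Classical in
/-- The number of stubborn agents of type `c` (red is `0`, blue is `1`) next to the node `p`. -/
noncomputable def stubbornDegree (H : SimpleGraph X) (s : ℕ) (c : Fin 2) (p : V5 X s) : ℕ :=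
  #{i | typ5 s (.inr i) = c ∧ (top5 X H s).Adj p (loc5 X s (.inr i))}

theorem fcount_update (hv : (game5 X H s).IsAssignment v) (a : Fin s) (p : V5 X s) :
    (game5 X H s).fcount (Function.update v (.inl a) p) (.inl a) =
      strategicDegree H v a p + stubbornDegree H s 0 p := by
  classical
  have hloc := fun i => hv.2 (.inr i) (inr_notMem_strategic i)
  have hred : ∀ c : Fin 2, 0 = c ↔ c = 0 := fun _ => eq_comm
  rw [SchellingGame.fcount, Nat.card_eq_fintype_card, Fintype.card_subtype, card_filter_sum]
  refine congrArg₂ (· + ·) (congrArg card (filter_congr fun j _ => ?_))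
    (congrArg card (filter_congr fun i _ => ?_))
  · by_cases hj : j = a
    · simp [hj]
    · simp [hj, Ne.symm hj, game5, net5, typ5]
  · simp [hloc, hred, game5, net5, typ5]

theorem ecount_update (hv : (game5 X H s).IsAssignment v) (a : Fin s) (p : V5 X s) :
    (game5 X H s).ecount (Function.update v (.inl a) p) (.inl a) = stubbornDegree H s 1 p := by
  classical
  have hloc := fun i => hv.2 (.inr i) (inr_notMem_strategic i)
  have hblue : ∀ c : Fin 2, ¬ 0 = c ↔ c = 1 := by decide
  rw [SchellingGame.ecount, Nat.card_eq_fintype_card, Fintype.card_subtype, card_filter_sum,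
    filter_false_of_mem, card_empty, zero_add]
  · refine congrArg card (filter_congr fun i _ => ?_)
    simp [hloc, hblue, game5, net5, typ5]
  · rintro j - ⟨hj, hfriend, -⟩
    exact hfriend ⟨hj.symm, rfl⟩

theorem payoff_eq (hv : (game5 X H s).IsAssignment v) (a : Fin s) (p : V5 X s) :
    (game5 X H s).payoff v (.inl a) p =
      (strategicDegree H v a p + stubbornDegree H s 0 p : ℚ) /
        (strategicDegree H v a p + stubbornDegree H s 0 p + stubbornDegree H s 1 p) := by
  rw [SchellingGame.payoff, SchellingGame.util_eq_div, fcount_update hv, ecount_update hv,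
    Nat.cast_add]

theorem stubbornDegree_graphNode (c : Fin 2) (u : X) :
    stubbornDegree H s c (graphNode u) = if c = 1 then s - 2 else 0 := by
  rw [stubbornDegree, card_filter_sum, card_filter_sum]
  fin_cases c <;> simp [top5, rel5, loc5, typ5]

theorem stubbornDegree_leftNode (c : Fin 2) (l : Fin (s - 2)) :
    stubbornDegree H s c (leftNode l) = if c = 0 then 2 * s + 1 else 2 * s - 1 := by
  have hpos : 0 < s - 2 := l.pos
  have hred : #{i : Fin (4 * s) | i.val < 2 * s + 1} = 2 * s + 1 := by
    rw [Fin.card_filter_val_lt, min_eq_right (by lia)]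
  have hblue : #{i : Fin (4 * s) | 2 * s + 1 ≤ i.val} = 2 * s - 1 := by
    rw [card_filter_le_val]
    lia
  rw [stubbornDegree, card_filter_sum, card_filter_sum]
  fin_cases c
  · simpa [top5, rel5, loc5, typ5] using hred
  · simpa [top5, rel5, loc5, typ5] using hblue

theorem stubbornDegree_gadgetNode (c : Fin 2) (t : Fin 3) :
    stubbornDegree H s c (gadgetNode t) = if c = 0 then ![1, 41, 5] t else ![2, 80, 7] t := by
  have hred : ∀ t : Fin 3, #{i : Fin 121 | i.val < 41 ∧
      (t.val = 0 ∧ (i.val = 0 ∨ i.val = 41 ∨ i.val = 42) ∨ t.val = 1 ∨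
        t.val = 2 ∧ (i.val < 5 ∨ 41 ≤ i.val ∧ i.val < 48))} = ![1, 41, 5] t := by decide
  have hblue : ∀ t : Fin 3, #{i : Fin 121 | 41 ≤ i.val ∧
      (t.val = 0 ∧ (i.val = 0 ∨ i.val = 41 ∨ i.val = 42) ∨ t.val = 1 ∨
        t.val = 2 ∧ (i.val < 5 ∨ 41 ≤ i.val ∧ i.val < 48))} = ![2, 80, 7] t := by decide
  rw [stubbornDegree, card_filter_sum, card_filter_sum]
  fin_cases c
  · simpa [top5, rel5, loc5, typ5] using hred t
  · simpa [top5, rel5, loc5, typ5] using hblue t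

theorem strategicDegree_le (v : A5 s → V5 X s) (a : Fin s) (p : V5 X s) :
    strategicDegree H v a p ≤ s - 1 := by
  classical
  calc strategicDegree H v a p ≤ #(univ.erase a) :=
        card_le_card fun j hj => mem_erase.2 ⟨(mem_filter.1 hj).2.1, mem_univ j⟩
    _ = s - 1 := by simp

theorem strategicDegree_eq_iff {p : V5 X s} :
    strategicDegree H v a p = s - 1 ↔ ∀ j ≠ a, (top5 X H s).Adj p (v (.inl j)) := by
  classical
  have herase : #(univ.erase a) = s - 1 := by simp
  rw [strategicDegree, ← herase, ← filter_ne', ← filter_filter, card_filter_eq_iff]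
  simp

theorem strategicDegree_leftNode (hv : (game5 X H s).IsAssignment v) (a : Fin s)
    (l : Fin (s - 2)) : strategicDegree H v a (leftNode l) = 0 := by
  classical
  rw [strategicDegree, card_eq_zero, filter_eq_empty_iff]
  rintro j - ⟨-, hadj⟩
  rcases exists_eq_graphNode_or_leftNode_or_gadgetNode hv j with ⟨u, h⟩ | ⟨l', h⟩ | ⟨t, h⟩ <;>
    simp [h, top5, rel5] at hadj

theorem strategicDegree_gadgetNode_le_one (hv : (game5 X H s).IsAssignment v) (a : Fin s)
    (t : Fin 3) : strategicDegree H v a (gadgetNode t) ≤ 1 := by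
  classical
  have hpartner : ∀ j, (top5 X H s).Adj (gadgetNode t) (v (.inl j)) →
      v (.inl j) = gadgetNode (1 - t) := by
    intro j hadj
    rcases exists_eq_graphNode_or_leftNode_or_gadgetNode hv j with ⟨u, h⟩ | ⟨l, h⟩ | ⟨t', h⟩ <;>
      rw [h] at hadj ⊢
    · simp [top5, rel5] at hadj
    · simp [top5, rel5] at hadj
    · fin_cases t <;> fin_cases t' <;> simp [top5, rel5] at hadj ⊢
  refine card_le_one.2 fun i hi j hj => Sum.inl_injective (hv.1 ?_)
  rw [hpartner i (mem_filter.1 hi).2.2, hpartner j (mem_filter.1 hj).2.2]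

end Degree

section Payoff

theorem payoff_graphNode (hv : (game5 X H s).IsAssignment v) (a : Fin s) (u : X) :
    (game5 X H s).payoff v (.inl a) (graphNode u) =
      strategicDegree H v a (graphNode u) /
        (strategicDegree H v a (graphNode u) + (s - 2 : ℕ)) := by
  simp [payoff_eq hv, stubbornDegree_graphNode]

theorem payoff_leftNode (hv : (game5 X H s).IsAssignment v) (a : Fin s) (l : Fin (s - 2)) :
    (game5 X H s).payoff v (.inl a) (leftNode l) = (2 * s + 1) / (4 * s) := by
  have hpos : 0 < s - 2 := l.pos
  have hred : stubbornDegree H s 0 (leftNode l) = 2 * s + 1 := stubbornDegree_leftNode 0 l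
  have hblue : stubbornDegree H s 1 (leftNode l) = 2 * s - 1 := stubbornDegree_leftNode 1 l
  have htotal : 2 * s + 1 + (2 * s - 1) = 4 * s := by lia
  rw [payoff_eq hv, strategicDegree_leftNode hv, hred, hblue, Nat.cast_zero, zero_add,
    ← Nat.cast_add, htotal]
  push_cast
  rfl

theorem payoff_gadgetNode (hv : (game5 X H s).IsAssignment v) (a : Fin s) (t : Fin 3) :
    (game5 X H s).payoff v (.inl a) (gadgetNode t) =
      (strategicDegree H v a (gadgetNode t) + ![1, 41, 5] t : ℚ) /
        (strategicDegree H v a (gadgetNode t) + ![3, 121, 12] t) := by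
  rw [payoff_eq hv, stubbornDegree_gadgetNode, stubbornDegree_gadgetNode]
  fin_cases t <;> simp <;> ring

theorem half_lt_payoff_leftNode (hv : (game5 X H s).IsAssignment v) (a : Fin s)
    (l : Fin (s - 2)) : 1 / 2 < (game5 X H s).payoff v (.inl a) (leftNode l) := by
  have hs : (0 : ℚ) < s := mod_cast a.pos
  rw [payoff_leftNode hv, lt_div_iff₀ (by positivity)]
  linarith

theorem payoff_gadgetNode_le_half (hv : (game5 X H s).IsAssignment v) (a : Fin s) (t : Fin 3) :
    (game5 X H s).payoff v (.inl a) (gadgetNode t) ≤ 1 / 2 := by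
  have hd : (strategicDegree H v a (gadgetNode t) : ℚ) ≤ 1 :=
    mod_cast strategicDegree_gadgetNode_le_one hv a t
  have hpos : (0 : ℚ) < ![3, 121, 12] t := by fin_cases t <;> norm_num
  have hred : 2 * ![1, 41, 5] t + 1 ≤ (![3, 121, 12] t : ℚ) := by fin_cases t <;> norm_num
  rw [payoff_gadgetNode hv, div_le_iff₀ (by positivity)]
  linarith

theorem le_payoff_gadgetNode (hv : (game5 X H s).IsAssignment v) (a : Fin s) {t : Fin 3}
    (ht : t ≠ 0) : 41 / 121 ≤ (game5 X H s).payoff v (.inl a) (gadgetNode t) := by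
  have hd : (0 : ℚ) ≤ strategicDegree H v a (gadgetNode t) := Nat.cast_nonneg _
  have hpos : (0 : ℚ) < ![3, 121, 12] t := by fin_cases t <;> norm_num
  have hred : 41 * ![3, 121, 12] t ≤ 121 * (![1, 41, 5] t : ℚ) := by
    fin_cases t
    · exact absurd rfl ht
    · norm_num
    · norm_num
  rw [payoff_gadgetNode hv, le_div_iff₀ (by positivity)]
  linarith

theorem adj_of_half_lt_payoff_graphNode (hv : (game5 X H s).IsAssignment v) {u : X}
    (hu : 1 / 2 < (game5 X H s).payoff v (.inl a) (graphNode u)) {j : Fin s} (hj : j ≠ a) :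
    (top5 X H s).Adj (graphNode u) (v (.inl j)) := by
  have hlt : s - 2 < strategicDegree H v a (graphNode u) := by
    by_contra! hle
    have hle' : (strategicDegree H v a (graphNode u) : ℚ) ≤ (s - 2 : ℕ) := mod_cast hle
    refine hu.not_ge ?_
    rw [payoff_graphNode hv]
    exact div_le_of_le_mul₀ (by positivity) (by norm_num) (by linarith)
  have hle := strategicDegree_le (H := H) v a (graphNode u)
  exact strategicDegree_eq_iff.1 (by lia) j hj

end Payoff

section OffLeft

open scoped Classical in
/-- The strategic agents that `v` places outside the side `L` of `G2`. -/
noncomputable def offLeft (v : A5 s → V5 X s) : Finset (Fin s) :=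
  {j | ∀ l, v (.inl j) ≠ leftNode l}

theorem mem_offLeft {j : Fin s} : j ∈ offLeft v ↔ ∀ l, v (.inl j) ≠ leftNode l := by
  simp [offLeft]

open scoped Classical in
theorem card_offLeft_add (hv : (game5 X H s).IsAssignment v) :
    #(offLeft v) + #{l | ∃ j, v (.inl j) = leftNode l} = s := by
  have hcompl : offLeft v = ({j | ∃ l, v (.inl j) = leftNode l} : Finset (Fin s))ᶜ := by
    ext j
    simp [offLeft]
  have hleft : #{j | ∃ l, v (.inl j) = leftNode l} = #{l | ∃ j, v (.inl j) = leftNode l} :=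
    card_filter_exists_eq_comm (hv.1.comp Sum.inl_injective)
      (Sum.inr_injective.comp (Sum.inl_injective.comp Sum.inl_injective))
  rw [hcompl, ← hleft, card_compl_add_card, Fintype.card_fin]

theorem exists_graphNode_and_forall_adj (hv : (game5 X H s).IsEquilibrium v) {l : Fin (s - 2)}
    (hl : ∀ j, v (.inl j) ≠ leftNode l) (ha : a ∈ offLeft v) :
    ∃ u, v (.inl a) = graphNode u ∧ ∀ j ≠ a, (top5 X H s).Adj (graphNode u) (v (.inl j)) := by
  have hlt : 1 / 2 < (game5 X H s).payoff v (.inl a) (v (.inl a)) :=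
    (half_lt_payoff_leftNode hv.1 a l).trans_le
      (payoff_le_of_isEquilibrium hv a hl fun i => loc5_ne_leftNode i l)
  rcases exists_eq_graphNode_or_leftNode_or_gadgetNode hv.1 a with ⟨u, h⟩ | ⟨l', h⟩ | ⟨t, h⟩
  · exact ⟨u, h, fun j => adj_of_half_lt_payoff_graphNode hv.1 (h ▸ hlt)⟩
  · exact absurd h (mem_offLeft.1 ha l')
  · exact absurd (payoff_gadgetNode_le_half hv.1 a t) (h ▸ hlt).not_ge

theorem isContained_of_forall_ne_leftNode (hv : (game5 X H s).IsEquilibrium v)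
    {l : Fin (s - 2)} (hl : ∀ j, v (.inl j) ≠ leftNode l) : completeGraph (Fin s) ⊑ H := by
  classical
  obtain ⟨a, ha⟩ : (offLeft v).Nonempty := by
    have hpos : 0 < s - 2 := l.pos
    have hcard := card_offLeft_add hv.1
    have hle := card_le_univ ({l | ∃ j, v (.inl j) = leftNode l} : Finset (Fin (s - 2)))
    rw [Fintype.card_fin] at hle
    exact card_pos.1 (by lia)
  have hoff : ∀ j, j ∈ offLeft v := by
    intro j
    obtain ⟨u, -, hadj⟩ := exists_graphNode_and_forall_adj hv hl ha
    by_cases hj : j = a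
    · exact hj ▸ ha
    · refine mem_offLeft.2 fun l' h => ?_
      simpa [h, top5, rel5] using hadj j hj
  choose f hf hadj using fun j => exists_graphNode_and_forall_adj hv hl (hoff j)
  let φ : completeGraph (Fin s) →g H :=
    ⟨f, fun {i j} hij => top5_adj_graphNode.1 (hf j ▸ hadj i j hij.symm)⟩
  exact ⟨⟨φ, Hom.injective_of_top_hom φ⟩⟩

theorem strategicDegree_of_offLeft_eq_pair [DecidableRel (top5 X H s).Adj]
    (hab : a ≠ b) (hpair : offLeft v = {a, b}) {p : V5 X s}
    (hp : ∀ l, ¬ (top5 X H s).Adj p (leftNode l)) :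
    strategicDegree H v a p = if (top5 X H s).Adj p (v (.inl b)) then 1 else 0 := by
  have hiff : ∀ j, j ≠ a ∧ (top5 X H s).Adj p (v (.inl j)) ↔
      j = b ∧ (top5 X H s).Adj p (v (.inl b)) := by
    refine fun j => ⟨fun ⟨hj, hadj⟩ => ?_, fun ⟨hj, hadj⟩ => hj ▸ ⟨hab.symm, hadj⟩⟩
    have hoff : j ∈ offLeft v := mem_offLeft.2 fun l hl => hp l (hl ▸ hadj)
    have hjb : j = b := by simpa [hpair, hj] using hoff
    exact ⟨hjb, hjb ▸ hadj⟩
  simp only [strategicDegree, hiff]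
  split_ifs with hadj <;> simp [hadj, filter_eq']

theorem forall_ne_gadgetNode_of_offLeft_eq_pair (hpair : offLeft v = {a, b}) {t : Fin 3}
    (ha : v (.inl a) ≠ gadgetNode t) (hb : v (.inl b) ≠ gadgetNode t) (j : Fin s) :
    v (.inl j) ≠ gadgetNode t := by
  intro hj
  have hoff : j ∈ offLeft v := mem_offLeft.2 (by simp [hj])
  rcases (by simpa [hpair] using hoff : j = a ∨ j = b) with rfl | rfl
  exacts [ha hj, hb hj]

theorem exists_eq_gadgetNode_of_offLeft_eq_pair (hs : 4 ≤ s)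
    (hv : (game5 X H s).IsEquilibrium v) (hab : a ≠ b) (hpair : offLeft v = {a, b}) :
    ∃ t, v (.inl a) = gadgetNode t := by
  classical
  rcases exists_eq_graphNode_or_leftNode_or_gadgetNode hv.1 a with ⟨u, h⟩ | ⟨l, h⟩ | h
  · obtain ⟨t, ht0, htb⟩ : ∃ t : Fin 3, t ≠ 0 ∧ v (.inl b) ≠ gadgetNode t := by
      by_contra! hcon
      simpa using (hcon 1 (by decide)).symm.trans (hcon 2 (by decide))
    have hle : 41 / 121 ≤ (game5 X H s).payoff v (.inl a) (graphNode u) := by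
      rw [← h]
      exact (le_payoff_gadgetNode hv.1 a ht0).trans (payoff_le_of_isEquilibrium hv a
        (forall_ne_gadgetNode_of_offLeft_eq_pair hpair (by simp [h]) htb)
        fun i => loc5_ne_gadgetNode i t)
    have hd : strategicDegree H v a (graphNode u) ≤ 1 := by
      rw [strategicDegree_of_offLeft_eq_pair hab hpair (by simp [top5, rel5])]
      split_ifs <;> simp
    have hd' : (strategicDegree H v a (graphNode u) : ℚ) ≤ 1 := mod_cast hd
    have hs' : (2 : ℚ) ≤ (s - 2 : ℕ) := mod_cast (by lia : 2 ≤ s - 2)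
    rw [payoff_graphNode hv.1, le_div_iff₀ (by positivity)] at hle
    linarith
  · exact absurd h (mem_offLeft.1 (by simp [hpair]) l)
  · exact h

theorem payoff_gadgetNode_add_one_lt (hv : (game5 X H s).IsAssignment v) (hab : a ≠ b)
    (hpair : offLeft v = {a, b}) {t : Fin 3} (hb : v (.inl b) = gadgetNode t) :
    (game5 X H s).payoff v (.inl a) (gadgetNode (t + 1)) <
      (game5 X H s).payoff v (.inl a) (gadgetNode (t + 2)) := by
  classical
  rw [payoff_gadgetNode hv, payoff_gadgetNode hv,
    strategicDegree_of_offLeft_eq_pair hab hpair (by simp [top5, rel5]),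
    strategicDegree_of_offLeft_eq_pair hab hpair (by simp [top5, rel5]), hb]
  -- `42 / 122 < 5 / 12`, `5 / 12 < 2 / 4` and `1 / 3 < 41 / 121` for `b` at `x`, `y` and `z`
  fin_cases t <;> simp [top5, rel5] <;> norm_num

theorem ne_gadgetNode_add_one (hv : (game5 X H s).IsEquilibrium v) (hab : a ≠ b)
    (hpair : offLeft v = {a, b}) {t : Fin 3} (hb : v (.inl b) = gadgetNode t) :
    v (.inl a) ≠ gadgetNode (t + 1) := by
  intro ha
  have hfree := forall_ne_gadgetNode_of_offLeft_eq_pair hpair (t := t + 2)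
    (by simp [ha]) (by simp [hb])
  refine (payoff_gadgetNode_add_one_lt hv.1 hab hpair hb).not_ge ?_
  rw [← ha]
  exact payoff_le_of_isEquilibrium hv a hfree fun i => loc5_ne_gadgetNode i _

theorem exists_forall_ne_leftNode (hs : 4 ≤ s) (hv : (game5 X H s).IsEquilibrium v) :
    ∃ l : Fin (s - 2), ∀ j, v (.inl j) ≠ leftNode l := by
  classical
  by_contra! hfull
  have hcard := card_offLeft_add hv.1
  rw [filter_true_of_mem fun l _ => hfull l, card_univ, Fintype.card_fin] at hcard
  obtain ⟨a, b, hab, hpair⟩ := card_eq_two.1 (by lia : #(offLeft v) = 2)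
  obtain ⟨t, ha⟩ := exists_eq_gadgetNode_of_offLeft_eq_pair hs hv hab hpair
  have hpair' : offLeft v = {b, a} := hpair.trans (pair_comm a b)
  obtain ⟨t', hb⟩ := exists_eq_gadgetNode_of_offLeft_eq_pair hs hv hab.symm hpair'
  have htt' : t ≠ t' := by
    rintro rfl
    exact hab (Sum.inl_injective (hv.1.1 (ha.trans hb.symm)))
  have hcycle : ∀ t t' : Fin 3, t ≠ t' → t = t' + 1 ∨ t' = t + 1 := by decide
  rcases hcycle t t' htt' with rfl | rfl
  · exact ne_gadgetNode_add_one hv hab hpair hb ha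
  · exact ne_gadgetNode_add_one hv hab.symm hpair' ha hb

end OffLeft

section CliquePlacement

variable {f : Fin s → X}

/-- The placement of the strategic agents `0, …, s - 1` on the vertices `f 0, …, f (s - 1)`
of `H`. -/
def vertexPlacement (f : Fin s → X) : A5 s → V5 X s :=
  Sum.elim (fun j => graphNode (f j)) fun i => loc5 X s (.inr i)

theorem isAssignment_vertexPlacement (hf : f.Injective) :
    (game5 X H s).IsAssignment (vertexPlacement f) := by
  refine ⟨Function.Injective.sumElim (Sum.inl_injective.comp (Sum.inl_injective.comp hf))
    loc5_inr_injective fun j i => (loc5_ne_graphNode i (f j)).symm, ?_⟩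
  rintro (j | i) hi
  · exact absurd (inl_mem_strategic j) hi
  · rfl

theorem payoff_vertexPlacement_self (φ : completeGraph (Fin s) →g H) (a : Fin s) :
    (game5 X H s).payoff (vertexPlacement φ) (.inl a) (graphNode (φ a)) =
      (s - 1 : ℕ) / ((s - 1 : ℕ) + (s - 2 : ℕ)) := by
  rw [payoff_graphNode (isAssignment_vertexPlacement φ.injective_of_top_hom),
    strategicDegree_eq_iff.2]
  exact fun j hj => top5_adj_graphNode.2 (φ.map_adj hj.symm)

theorem payoff_le_of_isAssignment (hs : 3 ≤ s) (hv : (game5 X H s).IsAssignment v) (a : Fin s)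
    {p : V5 X s} (hp : ∀ i, loc5 X s (.inr i) ≠ p) :
    (game5 X H s).payoff v (.inl a) p ≤ (s - 1 : ℕ) / ((s - 1 : ℕ) + (s - 2 : ℕ)) := by
  have hc : (0 : ℚ) < (s - 2 : ℕ) := mod_cast (by lia : 0 < s - 2)
  have hd : ((s - 1 : ℕ) : ℚ) = (s - 2 : ℕ) + 1 := mod_cast (by lia : s - 1 = s - 2 + 1)
  have hs' : (s : ℚ) = (s - 2 : ℕ) + 2 := mod_cast (by lia : s = s - 2 + 2)
  rcases p with (u | w) | (l | i) | t | i
  · rw [payoff_graphNode hv]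
    exact div_add_le_div_add (Nat.cast_nonneg _) hc (mod_cast strategicDegree_le v a _)
  · exact absurd rfl (hp (.inl w))
  · rw [payoff_leftNode hv, hd, hs', div_le_div_iff₀ (by positivity) (by positivity)]
    linarith
  · exact absurd rfl (hp (.inr (.inl i)))
  · refine (payoff_gadgetNode_le_half hv a t).trans ?_
    rw [hd, div_le_div_iff₀ (by positivity) (by positivity)]
    linarith
  · exact absurd rfl (hp (.inr (.inr i)))

theorem isEquilibrium_vertexPlacement (hs : 3 ≤ s) (φ : completeGraph (Fin s) →g H) :
    (game5 X H s).IsEquilibrium (vertexPlacement φ) := by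
  have hv := isAssignment_vertexPlacement (H := H) φ.injective_of_top_hom
  refine SchellingGame.isEquilibrium_iff_payoff_le.2 ⟨hv, ?_⟩
  rintro (a | i) ha p hp
  · exact (payoff_le_of_isAssignment hs hv a fun i => hp (.inr i)).trans_eq
      (payoff_vertexPlacement_self φ a).symm
  · exact absurd ha (inr_notMem_strategic i)

end CliquePlacement

end CliqueReduction

theorem stmt5_general {X : Type} (H : SimpleGraph X) {s : ℕ} (hs : 4 ≤ s) :
    (∃ v, (game5 X H s).IsEquilibrium v) ↔ ∃ C : Finset X, H.IsNClique s C := by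
  have hclique : (∃ C : Finset X, H.IsNClique s C) ↔ (⊤ : SimpleGraph (Fin s)).IsContained H := by
    rw [← SimpleGraph.not_cliqueFree_iff_top_isContained, SimpleGraph.CliqueFree, not_forall_not]
  rw [hclique]
  constructor
  · rintro ⟨v, hv⟩
    obtain ⟨l, hl⟩ := CliqueReduction.exists_forall_ne_leftNode hs hv
    exact CliqueReduction.isContained_of_forall_ne_leftNode hv hl
  · rintro ⟨φ⟩
    exact ⟨_, CliqueReduction.isEquilibrium_vertexPlacement (by lia) φ.toHom⟩

/-- for s ≥ 5, the game above admits an equilibrium assignment iff H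
contains a clique of size s. -/
theorem stmt5 (X : Type) [Fintype X] [DecidableEq X] (H : SimpleGraph X)
    (s : ℕ) (hs : 5 ≤ s) :
    (∃ v, (game5 X H s).IsEquilibrium v) ↔ ∃ C : Finset X, H.IsNClique s C :=
  stmt5_general H (by lia)
end

section
/- Let H = (X,Y) be an undirected graph and let s be an integer with 2 ≤ s < |X|. Construct a 2-typed Schelling game with types red and blue, s strategic red agents and one stubborn blue agent, whose topology G has vertex set X ∪ {w} (w ∉ X) and edge set Y ∪ {{v,w} : v ∈ X}, with the stubborn blue agent placed at w. Then this game admits an assignment with social welfare at least s−1 if and only if H contains a clique of size s. -/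
/-- Agents: `s` strategic red agents (`Sum.inl`) and one stubborn blue agent (`Sum.inr`). -/
abbrev A6 (s : ℕ) : Type := Fin s ⊕ Unit

/-- Types: red = 0 for the strategic agents, blue = 1 for the stubborn agent. -/
def typ6 (s : ℕ) : A6 s → Fin 2
  | .inl _ => 0
  | .inr _ => 1

/-- The social network of the 2-typed game: distinct agents of the same type. -/
def net6 (s : ℕ) : SimpleGraph (A6 s) where
  Adj i j := i ≠ j ∧ typ6 s i = typ6 s j
  symm := ⟨fun _ _ h => ⟨Ne.symm h.1, h.2.symm⟩⟩
  loopless := ⟨fun _ h => h.1 rfl⟩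

/-- The topology: vertex set `X ∪ {w}` (with `w = none`), edge set
`Y ∪ {{v,w} : v ∈ X}`. -/
def top6 (X : Type) (H : SimpleGraph X) : SimpleGraph (Option X) :=
  SimpleGraph.fromRel (fun p q => match p, q with
    | some u, some u' => H.Adj u u'
    | some _, none => True
    | _, _ => False)

/-- The 2-typed Schelling game of the reduction: `s` strategic red agents, one stubborn
blue agent placed at `w = none`. -/
def game6 (X : Type) (H : SimpleGraph X) (s : ℕ) : SchellingGame (A6 s) (Option X) where
  strategic := Finset.univ.filter (fun p => p.isLeft = true)
  net := net6 s
  top := top6 X H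
  loc := fun _ => none

/-
Assignments of the game are the injective placements `p : Fin s ↪ X` of the red agents, and the
only enemy of a red agent is the blue agent, to whom she is always adjacent. Hence, if `d i` is the
degree of `i` in the pullback of `H` along `p`, the social welfare is
`∑ i, d i / (d i + 1) = s - ∑ i, 1 / (d i + 1)`. As `d i + 1 ≤ s`, the last sum is at least `1` if
`s ≠ 0`, with equality exactly when every degree is `s - 1`, that is, when the pullback is complete.
-/

section Graph

variable {V K : Type*} [Fintype V] [Field K] [LinearOrder K] [IsStrictOrderedRing K]

theorem sum_inv_degree_add_one_le_one_iff_eq_top (G : SimpleGraph V) [DecidableRel G.Adj] :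
    ∑ i, ((G.degree i : K) + 1)⁻¹ ≤ 1 ↔ G = ⊤ := by
  cases isEmpty_or_nonempty V
  · simp [Subsingleton.elim G ⊤]
  have hcard : ∑ _i : V, (Fintype.card V : K)⁻¹ = 1 := by simp
  have hle : ∀ i ∈ Finset.univ, (Fintype.card V : K)⁻¹ ≤ ((G.degree i : K) + 1)⁻¹ := fun i _ =>
    inv_anti₀ (by positivity) (by exact_mod_cast G.degree_lt_card_verts i)
  calc ∑ i, ((G.degree i : K) + 1)⁻¹ ≤ 1
      ↔ ∑ _i : V, (Fintype.card V : K)⁻¹ = ∑ i, ((G.degree i : K) + 1)⁻¹ := by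
        rw [← (Finset.sum_le_sum hle).ge_iff_eq, hcard]
    _ ↔ ∀ i, (Fintype.card V : K)⁻¹ = ((G.degree i : K) + 1)⁻¹ := by
        simp only [Finset.sum_eq_sum_iff_of_le hle, Finset.mem_univ, true_imp_iff]
    _ ↔ ∀ i, G.degree i = Fintype.card V - 1 := forall_congr' fun i => by
        have := Fintype.card_pos (α := V)
        rw [inv_inj, ← Nat.cast_add_one, Nat.cast_inj]
        omega
    _ ↔ G = ⊤ := by
        classical
        simp only [SimpleGraph.degree_eq_card_sub_one, SimpleGraph.eq_top_iff_forall_isUniversal]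

theorem card_sub_one_le_sum_degree_div_iff_eq_top (G : SimpleGraph V) [DecidableRel G.Adj] :
    (Fintype.card V : K) - 1 ≤ ∑ i, (G.degree i : K) / (G.degree i + 1) ↔ G = ⊤ := by
  have hterm (i : V) : (G.degree i : K) / (G.degree i + 1) = 1 - ((G.degree i : K) + 1)⁻¹ := by
    field_simp
    ring
  simp only [hterm, Finset.sum_sub_distrib, Finset.sum_const, Finset.card_univ, nsmul_one,
    sub_le_sub_iff_left]
  exact sum_inv_degree_add_one_le_one_iff_eq_top G

theorem exists_embedding_comap_eq_top_iff_exists_isNClique {W : Type*} (G : SimpleGraph W) :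
    (∃ p : V ↪ W, G.comap p = ⊤) ↔ ∃ C, G.IsNClique (Fintype.card V) C := by
  calc (∃ p : V ↪ W, G.comap p = ⊤)
      ↔ (⊤ : SimpleGraph V).IsIndContained G :=
        ⟨fun ⟨p, hp⟩ => hp ▸ ⟨.comap p G⟩, fun ⟨f⟩ => ⟨f.toEmbedding, f.comap_eq⟩⟩
    _ ↔ ¬ G.CliqueFree (Fintype.card V) := by
        rw [SimpleGraph.top_isIndContained_iff_top_isContained,
          SimpleGraph.cliqueFree_iff_top_free, SimpleGraph.not_free]
    _ ↔ ∃ C, G.IsNClique (Fintype.card V) C := by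
        simp only [SimpleGraph.CliqueFree, not_forall, not_not]

end Graph

theorem SchellingGame.util_eq_div_s6 {A V : Type} (g : SchellingGame A V) (v : A → V) (i : A) :
    g.util v i = (g.fcount v i : ℚ) / (g.fcount v i + g.ecount v i) := by
  rw [util, ite_eq_right_iff]
  intro h
  rw [h, Nat.cast_zero, zero_div]

section Game

variable {X : Type} {H : SimpleGraph X} {s : ℕ}

/-- The assignment of `game6` determined by a placement `p` of the red agents on the vertices
of `H`: the blue agent is added at `w = none`. -/
def place6 (p : Fin s ↪ X) : A6 s → Option X :=
  Sum.elim (fun i => some (p i)) fun _ => none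

@[simp] theorem place6_inl (p : Fin s ↪ X) (i : Fin s) : place6 p (.inl i) = some (p i) := rfl

@[simp] theorem place6_inr (p : Fin s ↪ X) (u : Unit) : place6 p (.inr u) = none := rfl

theorem place6_injective (p : Fin s ↪ X) : Function.Injective (place6 p) :=
  ((Option.some_injective X).comp p.injective).sumElim (Function.injective_of_subsingleton _)
    fun _ _ => Option.some_ne_none _

@[simp] theorem top6_adj_some_some {x y : X} : (top6 X H).Adj (some x) (some y) ↔ H.Adj x y := by
  simpa [top6, H.adj_comm y x] using SimpleGraph.Adj.ne

@[simp] theorem top6_adj_some_none {x : X} : (top6 X H).Adj (some x) none := by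
  simp [top6]

@[simp] theorem net6_adj_inl_inl {i j : Fin s} : (net6 s).Adj (.inl i) (.inl j) ↔ i ≠ j := by
  simp [net6, typ6]

@[simp] theorem not_net6_adj_inl_inr {i : Fin s} {u : Unit} :
    ¬ (net6 s).Adj (.inl i) (.inr u) := by
  simp [net6, typ6]

theorem game6_strategic : (game6 X H s).strategic = Finset.univ.map Function.Embedding.inl := by
  ext (i | u) <;> simp [game6]

theorem game6_isAssignment_iff {v : A6 s → Option X} :
    (game6 X H s).IsAssignment v ↔ ∃ p : Fin s ↪ X, v = place6 p := by
  constructor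
  · rintro ⟨hinj, hstubborn⟩
    have hblue : v (.inr ()) = none := hstubborn (.inr ()) (by simp [game6_strategic])
    have hred (i : Fin s) : ∃ x, v (.inl i) = some x :=
      Option.ne_none_iff_exists'.mp fun h => Sum.inl_ne_inr (hinj (h.trans hblue.symm))
    choose p hp using hred
    have hp_inj : Function.Injective p := fun i j hij =>
      Sum.inl_injective (hinj (by rw [hp, hp, hij]))
    exact ⟨⟨p, hp_inj⟩, funext (Sum.rec hp fun _ => hblue)⟩
  · rintro ⟨p, rfl⟩
    refine ⟨place6_injective p, ?_⟩
    rintro (i | u) hi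
    · simp [game6_strategic] at hi
    · rfl

theorem game6_fcount_place6 [DecidableRel H.Adj] (p : Fin s ↪ X) (i : Fin s) :
    (game6 X H s).fcount (place6 p) (.inl i) = (H.comap p).degree i := by
  have hfriend (j : Fin s) : i ≠ j ∧ H.Adj (p i) (p j) ↔ (H.comap p).Adj i j :=
    and_iff_right_of_imp fun h => (H.comap p).ne_of_adj h
  calc (game6 X H s).fcount (place6 p) (.inl i)
      = Nat.card {j // (H.comap p).Adj i j} := by
        rw [SchellingGame.fcount, Nat.card_congr Equiv.subtypeSum, Nat.card_sum]
        simp [game6, hfriend]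
    _ = (H.comap p).degree i := by
        rw [← SimpleGraph.card_neighborSet_eq_degree, ← Nat.card_eq_fintype_card]
        rfl

theorem game6_ecount_place6 (p : Fin s ↪ X) (i : Fin s) :
    (game6 X H s).ecount (place6 p) (.inl i) = 1 := by
  have hred (j : Fin s) : ¬ (j ≠ i ∧ i = j ∧ H.Adj (p i) (p j)) := fun h => h.1 h.2.1.symm
  rw [SchellingGame.ecount, Nat.card_congr Equiv.subtypeSum, Nat.card_sum]
  simp [game6, hred]

theorem game6_SW_place6 [DecidableRel H.Adj] (p : Fin s ↪ X) :
    (game6 X H s).SW (place6 p) =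
      ∑ i, ((H.comap p).degree i : ℚ) / ((H.comap p).degree i + 1) := by
  simp only [SchellingGame.SW, game6_strategic, Finset.sum_map, Function.Embedding.inl_apply,
    SchellingGame.util_eq_div_s6, game6_fcount_place6, game6_ecount_place6, Nat.cast_one]

theorem sub_one_le_game6_SW_place6_iff (p : Fin s ↪ X) :
    (s : ℚ) - 1 ≤ (game6 X H s).SW (place6 p) ↔ H.comap p = ⊤ := by
  classical
  rw [game6_SW_place6, ← card_sub_one_le_sum_degree_div_iff_eq_top (K := ℚ), Fintype.card_fin]

end Game

theorem stmt6_general (X : Type) (H : SimpleGraph X) (s : ℕ) :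
    (∃ v, (game6 X H s).IsAssignment v ∧ (s : ℚ) - 1 ≤ (game6 X H s).SW v) ↔
      ∃ C : Finset X, H.IsNClique s C := by
  calc (∃ v, (game6 X H s).IsAssignment v ∧ (s : ℚ) - 1 ≤ (game6 X H s).SW v)
      ↔ ∃ p : Fin s ↪ X, (s : ℚ) - 1 ≤ (game6 X H s).SW (place6 p) := by
        simp only [game6_isAssignment_iff, ← exists_and_right, exists_comm (α := A6 s → _),
          exists_eq_left]
    _ ↔ ∃ p : Fin s ↪ X, H.comap p = ⊤ := by
        simp only [sub_one_le_game6_SW_place6_iff]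
    _ ↔ ∃ C : Finset X, H.IsNClique s C := by
        rw [exists_embedding_comap_eq_top_iff_exists_isNClique, Fintype.card_fin]

/-- the game above admits an assignment of social welfare at least s - 1
iff H contains a clique of size s. -/
theorem stmt6 (X : Type) [Fintype X] [DecidableEq X] (H : SimpleGraph X)
    (s : ℕ) (hs : 2 ≤ s) (hsX : s < Fintype.card X) :
    (∃ v, (game6 X H s).IsAssignment v ∧ (s : ℚ) - 1 ≤ (game6 X H s).SW v) ↔
      ∃ C : Finset X, H.IsNClique s C :=
  stmt6_general X H s
end
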